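/- Let s > 5/2. Define, for X = (u,η) ∈ H^s(𝕋) × H^{s-1}(𝕋), G(u,η) = ∂_x (1−∂²_x)^{-1}(½u² + (∂_x u)² + ½η²) and b(X) = (−G(u,η), −η ∂_x u). Then there is a constant C = C(s) > 0 such that for all X = (u,η) and Y = (v,ρ) in H^s(𝕋) × H^{s-1}(𝕋): (i) ‖b(X)‖_{H^s×H^{s-1}} ≤ C (‖u‖_{W^{1,∞}} + ‖η‖_{W^{1,∞}}) ‖(u,η)‖_{H^s×H^{s-1}}, and (ii) ‖b(X) − b(Y)‖_{H^s×H^{s-1}} ≤ C (‖(u,η)‖_{H^s×H^{s-1}} + ‖(v,ρ)‖_{H^s×H^{s-1}}) ‖(u−v, η−ρ)‖_{H^s×H^{s-1}}. -/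

import Mathlib

noncomputable section
open scoped BigOperators

/-- A (complex-valued) function on the torus `𝕋 = ℝ/2πℤ`, represented by its sequence of
Fourier coefficients `f̂ : ℤ → ℂ`. -/
abbrev FC := ℤ → ℂ

namespace FC

/-- The Sobolev weight `(1+k²)^s`. -/
def wt (s : ℝ) (k : ℤ) : ℝ := (1 + (k : ℝ) ^ 2) ^ s

/-- `c` represents a function belonging to the Sobolev space `H^s(𝕋)`. -/
def memHs (s : ℝ) (c : FC) : Prop := Summable fun k : ℤ => wt s k * ‖c k‖ ^ 2

/-- The `H^s(𝕋)` norm: `‖f‖²_{H^s} = Σ_{k∈ℤ} (1+k²)^s |f̂(k)|²`. -/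
def hsNorm (s : ℝ) (c : FC) : ℝ := Real.sqrt (∑' k : ℤ, wt s k * ‖c k‖ ^ 2)

/-- The `H^s(𝕋)` inner product `(f,g)_{H^s} = Σ_{k∈ℤ} (1+k²)^s f̂(k) conj(ĝ(k))`
(its real part; the sum is real for real-valued functions). -/
def hsInner (s : ℝ) (c d : FC) : ℝ :=
  (∑' k : ℤ, ((wt s k : ℂ) * (c k * (starRingEnd ℂ) (d k)))).re

/-- `c` represents a real-valued function (conjugate-symmetric coefficients). -/
def isReal (c : FC) : Prop := ∀ k : ℤ, c (-k) = (starRingEnd ℂ) (c k)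

/-- The derivative `∂ₓ`, i.e. the Fourier multiplier `ik`. -/
def D1 (c : FC) : FC := fun k => Complex.I * (k : ℂ) * c k

/-- The pointwise product of functions, i.e. convolution of Fourier coefficients. -/
def mul (c d : FC) : FC := fun k => ∑' j : ℤ, c j * d (k - j)

/-- The represented function, evaluated at `x ∈ ℝ`. -/
def eval (c : FC) (x : ℝ) : ℂ := ∑' k : ℤ, c k * Complex.exp (Complex.I * (k : ℂ) * (x : ℂ))

/-- The `L^∞` norm (supremum of the represented periodic function over ℝ). -/
def linfty (c : FC) : ℝ := ⨆ x : ℝ, ‖eval c x‖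

/-- The `W^{1,∞}` norm. -/
def w1infty (c : FC) : ℝ := linfty c + linfty (D1 c)

/-- A Fourier multiplier operator with real symbol `m`. -/
def mult (m : ℤ → ℝ) (c : FC) : FC := fun k => (m k : ℂ) * c k

/-- The operator `(1-∂ₓ²)⁻¹`, i.e. the Fourier multiplier `(1+k²)⁻¹`. -/
def helmInv : FC → FC := mult fun k => (1 + (k : ℝ) ^ 2)⁻¹

/-- The operator `1-∂ₓ²`, i.e. the Fourier multiplier `1+k²`. -/
def helm : FC → FC := mult fun k => 1 + (k : ℝ) ^ 2

/-- The operator `T̃_ε = (1-ε²∂ₓ²)⁻¹`, i.e. the Fourier multiplier `(1+ε²k²)⁻¹`. -/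
def T (ε : ℝ) : FC → FC := mult fun k => (1 + ε ^ 2 * (k : ℝ) ^ 2)⁻¹

/-- The periodic Hilbert transform, i.e. the Fourier multiplier `-i·sgn(k)`. -/
def hilbert (c : FC) : FC := fun k => -Complex.I * (Int.sign k : ℂ) * c k

/-- The Friedrichs-type mollifier `J_ε`, the Fourier multiplier `ĵ(εk)`. -/
def Jmol (jhat : ℝ → ℝ) (ε : ℝ) : FC → FC := mult fun k => jhat (ε * (k : ℝ))

/-- The generalized Lie derivative `𝓛_ξ f = ξ ∂ₓ f + (∂ₓ ξ) f`. -/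
def lie (ξ c : FC) : FC := mul ξ (D1 c) + mul (D1 ξ) c

/-- `𝓛²_ξ f = 𝓛_ξ (𝓛_ξ f)`. -/
def lie2 (ξ c : FC) : FC := lie ξ (lie ξ c)

/-- The coefficientwise sum `Σ_{k∈ℕ} F k` of a sequence of functions. -/
def tsumFC (F : ℕ → FC) : FC := fun m => ∑' k : ℕ, F k m

/-- The norm on the product space `H^{s₁}×H^{s₂}`. -/
def pairNorm (s₁ s₂ : ℝ) (c d : FC) : ℝ := Real.sqrt (hsNorm s₁ c ^ 2 + hsNorm s₂ d ^ 2)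

/-- The inner product on the product space `H^{s₁}×H^{s₂}`:
`((c₁,d₁),(c₂,d₂)) ↦ (c₁,c₂)_{H^{s₁}} + (d₁,d₂)_{H^{s₂}}`. -/
def pairInner (s₁ s₂ : ℝ) (c₁ d₁ c₂ d₂ : FC) : ℝ := hsInner s₁ c₁ c₂ + hsInner s₂ d₁ d₂

end FC

/-- `G(u,η) = ∂ₓ(1-∂ₓ²)⁻¹(½u² + uₓ² + ½η²)`. -/
def Gfun (u η : FC) : FC :=
  FC.D1 (FC.helmInv
    ((1 / 2 : ℝ) • FC.mul u u + FC.mul (FC.D1 u) (FC.D1 u) + (1 / 2 : ℝ) • FC.mul η η))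

namespace FC
open MeasureTheory AddCircle

instance fact2pi : Fact (0 < 2 * Real.pi) := ⟨by positivity⟩

/-- the continuous function on the circle with absolutely summable coefficients -/
def cm (a : FC) : C(AddCircle (2 * Real.pi), ℂ) := ∑' k : ℤ, a k • fourier k

lemma summable_cm {a : FC} (ha : Summable fun k => ‖a k‖) :
    Summable fun k : ℤ => a k • (fourier k : C(AddCircle (2 * Real.pi), ℂ)) := by
  apply Summable.of_norm
  simpa [norm_smul, fourier_norm] using ha

lemma cm_apply {a : FC} (ha : Summable fun k => ‖a k‖) (x : ℝ) :
    cm a (x : AddCircle (2 * Real.pi)) = eval a x := by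
  unfold cm eval
  rw [← ContinuousMap.tsum_apply (summable_cm ha)]
  refine tsum_congr fun k => ?_
  simp only [ContinuousMap.smul_apply, smul_eq_mul, fourier_coe_apply]
  congr 2
  have : (Real.pi : ℂ) ≠ 0 := by exact_mod_cast Real.pi_ne_zero
  push_cast
  field_simp

lemma fourierCoeff_cm {a : FC} (ha : Summable fun k => ‖a k‖) (n : ℤ) :
    fourierCoeff (ContinuousMap.toLp 2 haarAddCircle ℂ (cm a)) n = a n := by
  rw [← fourierBasis_repr, fourierBasis.repr_apply_apply, coe_fourierBasis]
  have h1 := ((summable_cm ha).hasSum.mapL (ContinuousMap.toLp 2 haarAddCircle ℂ)).mapL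
    (innerSL ℂ (fourierLp (T := 2 * Real.pi) 2 n))
  have h2 : ∀ k : ℤ, k ≠ n → (innerSL ℂ (fourierLp (T := 2 * Real.pi) 2 n))
      (ContinuousMap.toLp 2 haarAddCircle ℂ (a k • (fourier k : C(AddCircle (2 * Real.pi), ℂ)))) = 0 := by
    intro k hk
    rw [map_smul, map_smul]
    have := (orthonormal_fourier (T := 2 * Real.pi)).2 hk.symm
    rw [innerSL_apply_apply]
    change a k • inner ℂ (fourierLp 2 n) (fourierLp 2 k) = 0
    rw [this, smul_zero]
  have h3 := h1.unique (hasSum_single n h2)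
  rw [innerSL_apply_apply] at h3
  refine h3.trans ?_
  rw [map_smul, map_smul, innerSL_apply_apply]
  change a n • inner ℂ (fourierLp 2 n) (fourierLp 2 n) = a n
  rw [inner_self_eq_norm_sq_to_K, (orthonormal_fourier (T := 2 * Real.pi)).1 n]
  simp

lemma parseval {a : FC} (ha : Summable fun k => ‖a k‖) :
    HasSum (fun k => ‖a k‖ ^ 2) (∫ t : AddCircle (2 * Real.pi), ‖cm a t‖ ^ 2 ∂haarAddCircle) := by
  have h := hasSum_sq_fourierCoeff (ContinuousMap.toLp 2 haarAddCircle ℂ (cm a))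
  simp_rw [fourierCoeff_cm ha] at h
  convert h using 1
  apply integral_congr_ae
  filter_upwards [ContinuousMap.coeFn_toLp (p := 2) haarAddCircle (𝕜 := ℂ) (cm a)] with t ht
  rw [ht]

/-- The shear on `ℤ × ℤ`. -/
def shear : ℤ × ℤ ≃ ℤ × ℤ where
  toFun p := (p.2, p.1 - p.2)
  invFun p := (p.1 + p.2, p.1)
  left_inv p := by ext <;> simp
  right_inv p := by ext <;> simp

lemma summable_shear {a c : FC} (ha : Summable fun k => ‖a k‖) (hc : Summable fun k => ‖c k‖) :
    Summable fun p : ℤ × ℤ => ‖a p.2 * c (p.1 - p.2)‖ := by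
  have h := summable_mul_of_summable_norm (f := fun k => ‖a k‖) (g := fun k => ‖c k‖)
    (by simpa using ha) (by simpa using hc)
  have h2 := h.comp_injective shear.injective
  refine h2.congr fun p => ?_
  simp [shear]

lemma summable_conv {a c : FC} (ha : Summable fun k => ‖a k‖) (hc : Summable fun k => ‖c k‖)
    (k : ℤ) : Summable fun j => ‖a j * c (k - j)‖ :=
  (summable_shear ha hc).prod_factor k

lemma summable_mul {a c : FC} (ha : Summable fun k => ‖a k‖) (hc : Summable fun k => ‖c k‖) :
    Summable fun k => ‖mul a c k‖ := by
  refine Summable.of_nonneg_of_le (fun _ => norm_nonneg _) (fun k => ?_) (summable_shear ha hc).prod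
  exact norm_tsum_le_tsum_norm (summable_conv ha hc k)

lemma eval_term_norm (a : FC) (k : ℤ) (x : ℝ) :
    ‖a k * Complex.exp (Complex.I * (k : ℂ) * (x : ℂ))‖ = ‖a k‖ := by
  rw [norm_mul]
  have : Complex.I * (k : ℂ) * (x : ℂ) = ((k * x : ℝ) : ℂ) * Complex.I := by push_cast; ring
  rw [this, Complex.norm_exp_ofReal_mul_I, mul_one]

lemma eval_mul {a c : FC} (ha : Summable fun k => ‖a k‖) (hc : Summable fun k => ‖c k‖) (x : ℝ) :
    eval (mul a c) x = eval a x * eval c x := by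
  unfold eval
  have ha' : Summable fun k => ‖a k * Complex.exp (Complex.I * (k : ℂ) * (x : ℂ))‖ := by
    simpa only [eval_term_norm] using ha
  have hc' : Summable fun k => ‖c k * Complex.exp (Complex.I * (k : ℂ) * (x : ℂ))‖ := by
    simpa only [eval_term_norm] using hc
  rw [tsum_mul_tsum_of_summable_norm ha' hc', ← shear.tsum_eq]
  have hs := summable_shear ha' hc'
  change _ = ∑' p : ℤ × ℤ, _
  have hs2 := hs.of_norm
  rw [show (∑' p : ℤ × ℤ, a (shear p).1 * Complex.exp (Complex.I * ((shear p).1 : ℂ) * (x : ℂ)) *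
      (c (shear p).2 * Complex.exp (Complex.I * ((shear p).2 : ℂ) * (x : ℂ)))) = _ from
      hs2.tsum_prod]
  refine tsum_congr fun k => ?_
  unfold mul
  rw [← tsum_mul_right]
  refine tsum_congr fun j => ?_
  have : Complex.exp (Complex.I * (k : ℂ) * (x : ℂ)) = Complex.exp (Complex.I * (j : ℂ) * (x : ℂ))
      * Complex.exp (Complex.I * ((k - j : ℤ) : ℂ) * (x : ℂ)) := by
    rw [← Complex.exp_add]; congr 1; push_cast; ring
  rw [this]; ring

lemma l2_mul {a c : FC} (ha : Summable fun k => ‖a k‖) (hc : Summable fun k => ‖c k‖) {M : ℝ}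
    (hM : ∀ x, ‖eval c x‖ ≤ M) :
    (Summable fun k => ‖mul a c k‖ ^ 2) ∧ ∑' k, ‖mul a c k‖ ^ 2 ≤ M ^ 2 * ∑' k, ‖a k‖ ^ 2 := by
  have h1 := parseval (summable_mul ha hc)
  have h2 := parseval ha
  refine ⟨h1.summable, ?_⟩
  rw [h1.tsum_eq, h2.tsum_eq, ← integral_const_mul]
  apply integral_mono_of_nonneg
  · exact Filter.Eventually.of_forall fun t => by positivity
  · apply Continuous.integrable_of_hasCompactSupport
    · fun_prop
    · exact HasCompactSupport.of_compactSpace _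
  · refine Filter.Eventually.of_forall fun t => ?_
    induction t using QuotientAddGroup.induction_on with
    | H x =>
      have e1 := cm_apply (summable_mul ha hc) x
      have e2 := cm_apply ha x
      dsimp only
      rw [e1, e2, eval_mul ha hc, norm_mul, mul_pow, mul_comm]
      have := hM x
      gcongr

lemma mul_comm' (a c : FC) : mul a c = mul c a := by
  ext k
  unfold mul
  rw [← (Equiv.subLeft k).tsum_eq]
  refine tsum_congr fun j => ?_
  simp [mul_comm]

/-- de la Vallée-Poussin symbol -/
def vs (N : ℕ) (m : ℤ) : ℝ :=
  (((Finset.Ico (0 : ℤ) N).filter fun j => -(N : ℤ) ≤ j + m ∧ j + m < 2 * N).card : ℝ) / N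

lemma vs_nonneg (N : ℕ) (m : ℤ) : 0 ≤ vs N m := by unfold vs; positivity

lemma vs_le_one (N : ℕ) (m : ℤ) : vs N m ≤ 1 := by
  unfold vs
  apply div_le_one_of_le₀ _ (by positivity)
  have := Finset.card_filter_le (Finset.Ico (0 : ℤ) N) (fun j => -(N : ℤ) ≤ j + m ∧ j + m < 2 * N)
  rw [Int.card_Ico] at this
  simp only [sub_zero, Int.toNat_natCast] at this
  exact_mod_cast this

lemma vs_zero (m : ℤ) : vs 0 m = 0 := by simp [vs]

lemma vs_eq_one {N : ℕ} (hN : 0 < N) {m : ℤ} (hm : |m| ≤ N) : vs N m = 1 := by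
  unfold vs
  rw [Finset.filter_true_of_mem, Int.card_Ico]
  · simp only [sub_zero, Int.toNat_natCast]
    have : (N : ℝ) ≠ 0 := by positivity
    field_simp
  · intro j hj
    rw [Finset.mem_Ico] at hj
    rw [abs_le] at hm
    omega

lemma vs_eq_zero {N : ℕ} {m : ℤ} (hm : 2 * (N : ℤ) ≤ |m|) : vs N m = 0 := by
  unfold vs
  rw [Finset.filter_false_of_mem]
  · simp
  · intro j hj
    rw [Finset.mem_Ico] at hj
    rcases le_abs.1 hm with h | h <;> omega

lemma summable_mult {m : ℤ → ℝ} {c : FC} (h : ∀ k, |m k| ≤ 1) (hc : Summable fun k => ‖c k‖) :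
    Summable fun k => ‖mult m c k‖ := by
  refine Summable.of_nonneg_of_le (fun _ => norm_nonneg _) (fun k => ?_) hc
  unfold mult
  rw [norm_mul, Complex.norm_real, Real.norm_eq_abs]
  exact mul_le_of_le_one_left (norm_nonneg _) (h k)

lemma abs_vs (N : ℕ) (m : ℤ) : |vs N m| ≤ 1 := by
  rw [abs_of_nonneg (vs_nonneg _ _)]; exact vs_le_one _ _

lemma eval_vs {c : FC} (hc : Summable fun k => ‖c k‖) {M : ℝ} (hM : ∀ x, ‖eval c x‖ ≤ M)
    (N : ℕ) (x : ℝ) : ‖eval (mult (vs N) c) x‖ ≤ 2 * M := by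
  have hM0 : 0 ≤ M := (norm_nonneg _).trans (hM 0)
  rcases Nat.eq_zero_or_pos N with rfl | hN
  · simpa [eval, mult, vs_zero] using hM0
  set d : FC := fun k => c k * Complex.exp (Complex.I * (k : ℂ) * (x : ℂ)) with hd
  have hds : Summable fun k => ‖d k‖ := by simpa only [hd, eval_term_norm] using hc
  have hdM : ∀ y, ‖eval d y‖ ≤ M := by
    intro y
    have : eval d y = eval c (x + y) := by
      unfold eval
      refine tsum_congr fun k => ?_
      rw [hd]
      dsimp only
      rw [mul_assoc, ← Complex.exp_add]
      congr 2
      push_cast; ring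
    rw [this]; exact hM _
  set a : FC := fun j => if j ∈ Finset.Ico (0 : ℤ) N then 1 else 0 with haa
  have has : Summable fun k => ‖a k‖ := by
    refine (hasSum_sum_of_ne_finset_zero (s := Finset.Ico (0 : ℤ) N) ?_).summable
    intro j hj
    simp only [haa, hj, if_false]; simp
  have ha2 : ∑' k, ‖a k‖ ^ 2 = N := by
    rw [tsum_eq_sum (s := Finset.Ico (0 : ℤ) N)]
    · rw [Finset.sum_congr rfl (g := fun _ => (1 : ℝ))]
      · simp
      · intro j hj; simp only [haa, hj, if_true]; simp
    · intro j hj; simp only [haa, hj, if_false]; simp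
  have hmul : ∀ k, mul a d k = ∑ j ∈ Finset.Ico (0 : ℤ) N, d (k - j) := by
    intro k
    unfold mul
    rw [tsum_eq_sum (s := Finset.Ico (0 : ℤ) N)]
    · refine Finset.sum_congr rfl fun j hj => ?_
      simp only [haa, hj, if_true, one_mul]
    · intro j hj; simp only [haa, hj, if_false]; simp
  obtain ⟨hsq, hle⟩ := l2_mul has hds hdM
  rw [ha2] at hle
  set I := Finset.Ico (-(N : ℤ)) (2 * N) with hI
  have hIcard : (I.card : ℝ) = 3 * N := by
    rw [hI, Int.card_Ico]
    have : (2 * (N : ℤ) - -(N : ℤ)).toNat = 3 * N := by omega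
    rw [this]; push_cast; ring
  have hkey : (N : ℂ) * eval (mult (vs N) c) x = ∑ k ∈ I, mul a d k := by
    simp_rw [hmul]
    rw [Finset.sum_comm]
    unfold eval
    rw [← tsum_mul_left]
    have h1 : ∀ m : ℤ, (N : ℂ) * (mult (vs N) c m * Complex.exp (Complex.I * (m : ℂ) * (x : ℂ)))
        = ∑ j ∈ Finset.Ico (0 : ℤ) N, if j + m ∈ I then d m else 0 := by
      intro m
      rw [← Finset.sum_filter, Finset.sum_const, nsmul_eq_mul, mult, vs, hd]
      have : (N : ℂ) ≠ 0 := by exact_mod_cast hN.ne'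
      push_cast
      simp only [hI, Finset.mem_Ico]
      field_simp
    simp_rw [h1]
    have h2 : ∀ j : ℤ, HasSum (fun m => if j + m ∈ I then d m else 0) (∑ k ∈ I, d (k - j)) := by
      intro j
      have h3 : HasSum (fun k => if k ∈ I then d (k - j) else 0) (∑ k ∈ I, d (k - j)) := by
        have := hasSum_sum_of_ne_finset_zero (L := SummationFilter.unconditional ℤ)
          (f := fun k => if k ∈ I then d (k - j) else 0) (s := I)
          (by intro b hb; simp [hb])
        convert this using 1
        exact Finset.sum_congr rfl fun k hk => by simp [hk]
      rw [← (Equiv.addLeft j).hasSum_iff] at h3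
      convert h3 using 1
      ext m
      simp [Function.comp]
    exact (hasSum_sum fun j _ => h2 j).tsum_eq
  have hcs : ‖∑ k ∈ I, mul a d k‖ ^ 2 ≤ (2 * N * M) ^ 2 := by
    calc ‖∑ k ∈ I, mul a d k‖ ^ 2 ≤ (∑ k ∈ I, ‖mul a d k‖) ^ 2 := by
          gcongr; exact norm_sum_le _ _
      _ ≤ I.card * ∑ k ∈ I, ‖mul a d k‖ ^ 2 := sq_sum_le_card_mul_sum_sq
      _ ≤ I.card * (M ^ 2 * N) := by
          gcongr
          exact (hsq.sum_le_tsum _ fun _ _ => by positivity).trans hle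
      _ ≤ (2 * N * M) ^ 2 := by
          rw [hIcard]; nlinarith [sq_nonneg (N * M)]
  rw [← hkey] at hcs
  have h5 := abs_le_of_sq_le_sq hcs (by positivity)
  have h6 := (abs_le.1 (by simpa using h5 : |‖(N : ℂ) * eval (mult (vs N) c) x‖| ≤ _)).2
  rw [norm_mul, Complex.norm_natCast] at h6
  have hNp : (0 : ℝ) < N := by exact_mod_cast hN
  nlinarith

lemma synth (σ : ℝ) (hσ : 0 < σ) : ∃ C > (0 : ℝ), ∀ (N : ℕ) (x : ℕ → ℝ) (W : ℝ), 0 < W →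
    (∀ n, 0 ≤ x n) → (∀ n, x n ≠ 0 → W ≤ 16 * 4 ^ n) →
    W ^ σ * (∑ n ∈ Finset.range N, x n) ^ 2 ≤
      C * ∑ n ∈ Finset.range N, ((4 : ℝ) ^ σ) ^ n * x n ^ 2 := by
  set r : ℝ := (2 : ℝ) ^ σ with hr
  have hr1 : 1 < r := Real.one_lt_rpow (by norm_num) hσ
  have hr0 : 0 < r := by linarith
  have hq : (4 : ℝ) ^ σ = r * r := by
    rw [hr, ← Real.mul_rpow (by norm_num) (by norm_num)]; norm_num
  have hρ1 : r⁻¹ < 1 := inv_lt_one_of_one_lt₀ hr1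
  have hρ0 : 0 < r⁻¹ := by positivity
  have h1ρ : 0 < 1 - r⁻¹ := by linarith
  refine ⟨16 ^ σ / (1 - r⁻¹), by positivity, ?_⟩
  intro N x W hW hx hsupp
  set T := (Finset.range N).filter fun n => x n ≠ 0 with hT
  have e1 : ∑ n ∈ Finset.range N, x n = ∑ n ∈ T, x n := by
    rw [hT, Finset.sum_filter_ne_zero]
  have e2 : ∑ n ∈ T, (r * r) ^ n * x n ^ 2 ≤ ∑ n ∈ Finset.range N, (r * r) ^ n * x n ^ 2 := by
    apply Finset.sum_le_sum_of_subset_of_nonneg (Finset.filter_subset _ _)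
    intros; positivity
  rw [hq, e1]
  refine le_trans ?_ (mul_le_mul_of_nonneg_left e2 (by positivity))
  rcases T.eq_empty_or_nonempty with h0 | hne
  · simp [h0]
  set n0 := T.min' hne with hn0
  have hn0T : n0 ∈ T := T.min'_mem hne
  have hn0W : W ≤ 16 * 4 ^ n0 := hsupp _ (Finset.mem_filter.1 hn0T).2
  have hWσ : W ^ σ ≤ 16 ^ σ * (r * r) ^ n0 := by
    calc W ^ σ ≤ (16 * 4 ^ n0) ^ σ := Real.rpow_le_rpow hW.le hn0W hσ.le
      _ = 16 ^ σ * (r * r) ^ n0 := by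
        rw [Real.mul_rpow (by norm_num) (by positivity), ← hq, ← Real.rpow_natCast,
          ← Real.rpow_natCast, ← Real.rpow_mul (by norm_num), ← Real.rpow_mul (by norm_num),
          mul_comm σ]
  have hcs := Finset.sum_sq_le_sum_mul_sum_of_sq_le_mul T (r := x) (f := fun n => r⁻¹ ^ n)
    (g := fun n => r ^ n * x n ^ 2) (by intros; positivity) (by intros; positivity)
    (by intro n _; apply le_of_eq; rw [← mul_assoc, ← mul_pow, inv_mul_cancel₀ hr0.ne', one_pow, one_mul])
  have hgeo : ∑ n ∈ T, r⁻¹ ^ n ≤ r⁻¹ ^ n0 / (1 - r⁻¹) := by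
    refine le_trans ?_ (geom_sum_Ico_le_of_lt_one (m := n0) (n := N) hρ0.le hρ1)
    apply Finset.sum_le_sum_of_subset_of_nonneg
    · intro n hn
      rw [Finset.mem_Ico]
      exact ⟨T.min'_le n hn, Finset.mem_range.1 (Finset.mem_filter.1 hn).1⟩
    · intros; positivity
  calc W ^ σ * (∑ n ∈ T, x n) ^ 2
      ≤ (16 ^ σ * (r * r) ^ n0) * ((r⁻¹ ^ n0 / (1 - r⁻¹)) * ∑ n ∈ T, r ^ n * x n ^ 2) := by
        refine mul_le_mul hWσ (hcs.trans ?_) (by positivity) (by positivity)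
        refine mul_le_mul_of_nonneg_right hgeo ?_
        exact Finset.sum_nonneg fun n _ => by positivity
    _ = 16 ^ σ / (1 - r⁻¹) * ∑ n ∈ T, r ^ n0 * (r ^ n * x n ^ 2) := by
        rw [← Finset.mul_sum, mul_pow, inv_pow]
        field_simp
    _ ≤ 16 ^ σ / (1 - r⁻¹) * ∑ n ∈ T, (r * r) ^ n * x n ^ 2 := by
        refine mul_le_mul_of_nonneg_left (Finset.sum_le_sum fun n hn => ?_) (by positivity)
        rw [mul_pow, mul_assoc]
        have : r ^ n0 ≤ r ^ n := pow_le_pow_right₀ hr1.le (T.min'_le n hn)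
        gcongr

lemma analys (σ : ℝ) (hσ : 0 < σ) : ∃ C > (0 : ℝ), ∀ (N : ℕ) (x : ℕ → ℝ) (W : ℝ), 0 < W →
    (∀ n, |x n| ≤ 1) → (∀ n, x n ≠ 0 → 4 ^ n ≤ 4 * W) →
    ∑ n ∈ Finset.range N, ((4 : ℝ) ^ σ) ^ n * x n ^ 2 ≤ C * W ^ σ := by
  set q : ℝ := (4 : ℝ) ^ σ with hq
  have hq1 : 1 < q := Real.one_lt_rpow (by norm_num) hσ
  have hq0 : 0 < q := by linarith
  have hq2 : 0 < q - 1 := by linarith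
  refine ⟨q / (q - 1) * q, by positivity, ?_⟩
  intro N x W hW hx hsupp
  set T := (Finset.range N).filter fun n => x n ≠ 0 with hT
  have e1 : ∑ n ∈ Finset.range N, q ^ n * x n ^ 2 = ∑ n ∈ T, q ^ n * x n ^ 2 := by
    rw [hT, Finset.sum_filter_of_ne]
    intro n _ h h'
    apply h; rw [h']; simp
  rw [e1]
  rcases T.eq_empty_or_nonempty with h0 | hne
  · simp only [h0, Finset.sum_empty]; positivity
  set n1 := T.max' hne with hn1
  have hn1W : (4 : ℝ) ^ n1 ≤ 4 * W := hsupp _ (Finset.mem_filter.1 (T.max'_mem hne)).2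
  have hqW : q ^ n1 ≤ q * W ^ σ := by
    calc q ^ n1 = ((4 : ℝ) ^ n1) ^ σ := by
          rw [hq, ← Real.rpow_natCast, ← Real.rpow_natCast, ← Real.rpow_mul (by norm_num),
            ← Real.rpow_mul (by norm_num), mul_comm σ]
      _ ≤ (4 * W) ^ σ := Real.rpow_le_rpow (by positivity) hn1W hσ.le
      _ = q * W ^ σ := Real.mul_rpow (by norm_num) hW.le
  calc ∑ n ∈ T, q ^ n * x n ^ 2 ≤ ∑ n ∈ T, q ^ n := by
        refine Finset.sum_le_sum fun n _ => ?_
        refine mul_le_of_le_one_right (by positivity) ?_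
        have := hx n
        rw [← sq_abs]
        exact pow_le_one₀ (abs_nonneg _) this
    _ ≤ ∑ n ∈ Finset.range (n1 + 1), q ^ n := by
        apply Finset.sum_le_sum_of_subset_of_nonneg
        · intro n hn
          rw [Finset.mem_range]
          exact Nat.lt_succ_of_le (T.le_max' n hn)
        · intros; positivity
    _ = (q ^ (n1 + 1) - 1) / (q - 1) := geom_sum_eq hq1.ne' _
    _ ≤ q ^ (n1 + 1) / (q - 1) := by gcongr; linarith
    _ = q / (q - 1) * q ^ n1 := by rw [pow_succ]; ring
    _ ≤ q / (q - 1) * q * W ^ σ := by rw [mul_assoc]; gcongr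

/-- dyadic block symbol -/
def dl (n : ℕ) (k : ℤ) : ℝ := vs (2 ^ n) k - vs (2 ^ n / 2) k

lemma abs_dl (n : ℕ) (k : ℤ) : |dl n k| ≤ 1 := by
  unfold dl
  rw [abs_le]
  constructor <;>
  linarith [vs_nonneg (2 ^ n) k, vs_nonneg (2 ^ n / 2) k, vs_le_one (2 ^ n) k,
    vs_le_one (2 ^ n / 2) k]

lemma dl_low (n : ℕ) (k : ℤ) (h : dl n k ≠ 0) : (4 : ℝ) ^ n ≤ 4 * (1 + (k : ℝ) ^ 2) := by
  rcases n with _ | n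
  · nlinarith [sq_nonneg (k : ℝ)]
  · by_contra hcon
    push Not at hcon
    apply h
    have hk : |k| ≤ (2 ^ n : ℕ) := by
      have h1 : (k : ℝ) ^ 2 ≤ ((2 : ℝ) ^ n) ^ 2 := by
        rw [← pow_mul, mul_comm n, pow_mul]; norm_num
        rw [pow_succ (4 : ℝ) n] at hcon; linarith
      have h2 := abs_le_of_sq_le_sq h1 (by positivity)
      have h3 : |(k : ℝ)| ≤ 2 ^ n := abs_le.2 (by simpa [abs_le] using h2)
      exact_mod_cast h3
    have e : 2 ^ (n + 1) / 2 = 2 ^ n := by rw [pow_succ]; simp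
    have hk' : |k| ≤ (2 ^ (n + 1) : ℕ) := by
      refine hk.trans ?_
      exact_mod_cast Nat.pow_le_pow_right (by norm_num) (Nat.le_succ n)
    unfold dl
    rw [e, vs_eq_one (by positivity) hk, vs_eq_one (by positivity) hk', sub_self]

lemma vs_high (n : ℕ) (k : ℤ) (h : 2 * 2 ^ n ≤ |k|) : vs (2 ^ n) k = 0 := by
  apply vs_eq_zero; push_cast; exact h

lemma vs_high' (n : ℕ) (k : ℤ) (h : 2 * 2 ^ n ≤ |k|) : vs (2 ^ n / 2) k = 0 := by
  apply vs_eq_zero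
  refine le_trans ?_ h
  have : 2 ^ n / 2 ≤ 2 ^ n := Nat.div_le_self _ _
  have h2 : ((2 ^ n / 2 : ℕ) : ℤ) ≤ ((2 ^ n : ℕ) : ℤ) := by exact_mod_cast this
  push_cast at h2 ⊢
  linarith

lemma dl_high (n : ℕ) (k : ℤ) (h : 2 * 2 ^ n ≤ |k|) : dl n k = 0 := by
  rw [dl, vs_high n k h, vs_high' n k h, sub_zero]

lemma mul_supp {m₁ m₂ : ℤ → ℝ} (n : ℕ) (h1 : ∀ k : ℤ, 2 * 2 ^ n ≤ |k| → m₁ k = 0)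
    (h2 : ∀ k : ℤ, 2 * 2 ^ n ≤ |k| → m₂ k = 0) (f g : FC) (k : ℤ)
    (h : mul (mult m₁ f) (mult m₂ g) k ≠ 0) : 1 + (k : ℝ) ^ 2 ≤ 16 * 4 ^ n := by
  by_contra hcon
  push Not at hcon
  apply h
  have hk : 4 * 2 ^ n ≤ |k| := by
    by_contra hlt
    push Not at hlt
    have h3 : k ^ 2 < (4 * 2 ^ n) ^ 2 := by
      rw [sq_lt_sq]; rwa [abs_of_nonneg (by positivity : (0:ℤ) ≤ 4 * 2 ^ n)]
    have h4 : k ^ 2 + 1 ≤ 16 * 4 ^ n := by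
      have : (4 * 2 ^ n : ℤ) ^ 2 = 16 * 4 ^ n := by
        rw [mul_pow, ← pow_mul, mul_comm n, pow_mul]; norm_num
      omega
    have h5 : (k : ℝ) ^ 2 + 1 ≤ 16 * 4 ^ n := by exact_mod_cast h4
    linarith
  unfold mul mult
  refine (tsum_congr fun j => ?_).trans tsum_zero
  by_cases hj : 2 * 2 ^ n ≤ |j|
  · rw [h1 j hj]; simp
  · rw [h2 (k - j)]
    · simp
    · have := abs_sub_abs_le_abs_sub k j
      linarith

lemma mul_sub_left {a b c : FC} (ha : Summable fun k => ‖a k‖) (hb : Summable fun k => ‖b k‖)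
    (hc : Summable fun k => ‖c k‖) : mul (a - b) c = mul a c - mul b c := by
  ext k
  simp only [mul, Pi.sub_apply, sub_mul]
  exact (summable_conv ha hc k).of_norm.tsum_sub (summable_conv hb hc k).of_norm

lemma mul_sub_right {a b c : FC} (ha : Summable fun k => ‖a k‖) (hb : Summable fun k => ‖b k‖)
    (hc : Summable fun k => ‖c k‖) : mul c (a - b) = mul c a - mul c b := by
  rw [mul_comm', mul_sub_left ha hb hc, mul_comm' a, mul_comm' b]

lemma mult_dl (n : ℕ) (f : FC) :
    mult (dl n) f = mult (vs (2 ^ n)) f - mult (vs (2 ^ n / 2)) f := by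
  ext k; simp [mult, dl, sub_mul]

/-- partial product -/
def Tp (f g : FC) (n : ℕ) : FC := mul (mult (vs (2 ^ n / 2)) f) (mult (vs (2 ^ n / 2)) g)

lemma Tp_zero (f g : FC) (k : ℤ) : Tp f g 0 k = 0 := by
  simp [Tp, mul, mult, vs_zero]

lemma Tp_succ {f g : FC} (hf : Summable fun k => ‖f k‖) (hg : Summable fun k => ‖g k‖) (n : ℕ)
    (k : ℤ) : Tp f g (n + 1) k - Tp f g n k = mul (mult (dl n) f) (mult (vs (2 ^ n)) g) k
      + mul (mult (dl n) g) (mult (vs (2 ^ n / 2)) f) k := by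
  have e : 2 ^ (n + 1) / 2 = 2 ^ n := by rw [pow_succ]; simp
  have s1 := fun N => summable_mult (abs_vs N) hf
  have s2 := fun N => summable_mult (abs_vs N) hg
  rw [Tp, Tp, e, mult_dl, mult_dl, mul_sub_left (s1 _) (s1 _) (s2 _),
    mul_sub_left (s2 _) (s2 _) (s1 _), mul_comm' (mult (vs (2 ^ n)) g),
    mul_comm' (mult (vs (2 ^ n / 2)) g)]
  simp

lemma Tp_tendsto {f g : FC} (hf : Summable fun k => ‖f k‖) (hg : Summable fun k => ‖g k‖)
    (k : ℤ) : Filter.Tendsto (fun n => Tp f g n k) Filter.atTop (nhds (mul f g k)) := by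
  unfold Tp mul
  apply tendsto_tsum_of_dominated_convergence (summable_conv hf hg k)
  · intro j
    apply tendsto_const_nhds.congr'
    have hlim : Filter.Tendsto (fun n : ℕ => ((2 ^ n / 2 : ℕ))) Filter.atTop Filter.atTop := by
      exact (Filter.tendsto_add_atTop_iff_nat 1).1 (by
        simpa [pow_succ] using tendsto_pow_atTop_atTop_of_one_lt (r := (2 : ℕ)) (by norm_num))
    filter_upwards [hlim.eventually_ge_atTop (max 1 (max j.natAbs (k - j).natAbs))] with n hn
    have h1 := vs_eq_one (N := 2 ^ n / 2) (m := j) (by omega) (by rw [Int.abs_eq_natAbs]; omega)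
    have h2 := vs_eq_one (N := 2 ^ n / 2) (m := k - j) (by omega) (by rw [Int.abs_eq_natAbs]; omega)
    simp [mult, h1, h2]
  · refine Filter.Eventually.of_forall fun n j => ?_
    simp only [mult, norm_mul, Complex.norm_real, Real.norm_eq_abs]
    have h1 := abs_vs (2 ^ n / 2) j
    have h2 := abs_vs (2 ^ n / 2) (k - j)
    gcongr
    · exact mul_le_of_le_one_left (norm_nonneg _) h1
    · exact mul_le_of_le_one_left (norm_nonneg _) h2

/-- squared Sobolev norm -/
def E (σ : ℝ) (c : FC) : ℝ := ∑' k : ℤ, wt σ k * ‖c k‖ ^ 2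

lemma wt_nonneg (σ : ℝ) (k : ℤ) : 0 ≤ wt σ k := by unfold wt; positivity

lemma E_nonneg (σ : ℝ) (c : FC) : 0 ≤ E σ c :=
  tsum_nonneg fun k => mul_nonneg (wt_nonneg _ _) (by positivity)

lemma E_of_sum_le {σ : ℝ} {c : FC} {Q : ℝ} (h : ∀ F : Finset ℤ, ∑ k ∈ F, wt σ k * ‖c k‖ ^ 2 ≤ Q) :
    memHs σ c ∧ E σ c ≤ Q := by
  have hs : memHs σ c := summable_of_sum_le (fun k => mul_nonneg (wt_nonneg _ _) (by positivity)) h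
  exact ⟨hs, hs.tsum_le_of_sum_le h⟩

lemma block_sum (σ : ℝ) {C : ℝ} (hC : ∀ (N : ℕ) (x : ℕ → ℝ) (W : ℝ), 0 < W →
    (∀ n, |x n| ≤ 1) → (∀ n, x n ≠ 0 → 4 ^ n ≤ 4 * W) →
    ∑ n ∈ Finset.range N, ((4 : ℝ) ^ σ) ^ n * x n ^ 2 ≤ C * W ^ σ) {f : FC}
    (hf : Summable fun k => ‖f k‖) (hfs : memHs σ f) (N : ℕ) :
    ∑ n ∈ Finset.range N, ((4 : ℝ) ^ σ) ^ n * ∑' k, ‖mult (dl n) f k‖ ^ 2 ≤ C * E σ f := by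
  have hs : ∀ n, Summable fun k => ‖mult (dl n) f k‖ ^ 2 := fun n =>
    (parseval (summable_mult (abs_dl n) hf)).summable
  simp_rw [← tsum_mul_left]
  rw [← Summable.tsum_finsetSum fun n _ => (hs n).mul_left _, E, ← tsum_mul_left]
  refine Summable.tsum_le_tsum (fun k => ?_) (summable_sum fun n _ => (hs n).mul_left _)
    (hfs.mul_left _)
  have h := hC N (fun n => dl n k) (1 + (k : ℝ) ^ 2) (by positivity) (fun n => abs_dl n k)
    (fun n => dl_low n k)
  calc ∑ n ∈ Finset.range N, ((4 : ℝ) ^ σ) ^ n * ‖mult (dl n) f k‖ ^ 2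
      = (∑ n ∈ Finset.range N, ((4 : ℝ) ^ σ) ^ n * dl n k ^ 2) * ‖f k‖ ^ 2 := by
        rw [Finset.sum_mul]
        refine Finset.sum_congr rfl fun n _ => ?_
        rw [mult, norm_mul, mul_pow, Complex.norm_real, Real.norm_eq_abs, sq_abs]; ring
    _ ≤ C * (wt σ k) * ‖f k‖ ^ 2 := by
        unfold wt
        gcongr
    _ = _ := by ring

lemma moser (σ : ℝ) (hσ : 0 < σ) : ∃ C > (0 : ℝ), ∀ (f g : FC) (A B : ℝ),
    (Summable fun k => ‖f k‖) → (Summable fun k => ‖g k‖) → memHs σ f → memHs σ g →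
    (∀ x, ‖eval f x‖ ≤ A) → (∀ x, ‖eval g x‖ ≤ B) →
    memHs σ (mul f g) ∧ E σ (mul f g) ≤ C * (B ^ 2 * E σ f + A ^ 2 * E σ g) := by
  obtain ⟨C₁, hC₁, synth⟩ := synth σ hσ
  obtain ⟨C₂, hC₂, analys⟩ := analys σ hσ
  refine ⟨C₁ * (8 * C₂), by positivity, ?_⟩
  intro f g A B hf hg hfs hgs hA hB
  apply E_of_sum_le
  intro F
  have hlim : Filter.Tendsto (fun N => ∑ k ∈ F, wt σ k * ‖Tp f g N k‖ ^ 2) Filter.atTop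
      (nhds (∑ k ∈ F, wt σ k * ‖mul f g k‖ ^ 2)) :=
    tendsto_finsetSum _ fun k _ => ((Tp_tendsto hf hg k).norm.pow 2).const_mul _
  refine le_of_tendsto' hlim fun N => ?_
  set h : ℕ → ℤ → ℂ := fun n k => mul (mult (dl n) f) (mult (vs (2 ^ n)) g) k
      + mul (mult (dl n) g) (mult (vs (2 ^ n / 2)) f) k with hh
  have hT : ∀ k, Tp f g N k = ∑ n ∈ Finset.range N, h n k := by
    intro k
    have := Finset.sum_range_sub (fun n => Tp f g n k) N
    rw [Tp_zero, sub_zero] at this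
    rw [← this]
    exact Finset.sum_congr rfl fun n _ => Tp_succ hf hg n k
  have hpt : ∀ k, wt σ k * ‖Tp f g N k‖ ^ 2 ≤
      C₁ * ∑ n ∈ Finset.range N, ((4 : ℝ) ^ σ) ^ n * ‖h n k‖ ^ 2 := by
    intro k
    refine le_trans ?_ (synth N (fun n => ‖h n k‖) (1 + (k : ℝ) ^ 2) (by positivity)
      (fun n => norm_nonneg _) ?_)
    · unfold wt
      rw [hT]
      gcongr
      exact norm_sum_le _ _
    · intro n hn
      by_contra hcon
      apply hn
      have e1 : mul (mult (dl n) f) (mult (vs (2 ^ n)) g) k = 0 := by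
        by_contra h0
        exact hcon (mul_supp n (dl_high n) (vs_high n) _ _ k h0)
      have e2 : mul (mult (dl n) g) (mult (vs (2 ^ n / 2)) f) k = 0 := by
        by_contra h0
        exact hcon (mul_supp n (dl_high n) (vs_high' n) _ _ k h0)
      simp [hh, e1, e2]
  have hn : ∀ n, ∑ k ∈ F, ‖h n k‖ ^ 2 ≤ 8 * (B ^ 2 * ∑' k, ‖mult (dl n) f k‖ ^ 2
      + A ^ 2 * ∑' k, ‖mult (dl n) g k‖ ^ 2) := by
    intro n
    obtain ⟨p1, p2⟩ := l2_mul (summable_mult (abs_dl n) hf) (summable_mult (abs_vs (2 ^ n)) hg)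
      (eval_vs hg hB (2 ^ n))
    obtain ⟨q1, q2⟩ := l2_mul (summable_mult (abs_dl n) hg) (summable_mult (abs_vs (2 ^ n / 2)) hf)
      (eval_vs hf hA (2 ^ n / 2))
    have p3 := p1.sum_le_tsum F fun _ _ => by positivity
    have q3 := q1.sum_le_tsum F fun _ _ => by positivity
    have : ∑ k ∈ F, ‖h n k‖ ^ 2 ≤ ∑ k ∈ F, (2 * ‖mul (mult (dl n) f) (mult (vs (2 ^ n)) g) k‖ ^ 2
        + 2 * ‖mul (mult (dl n) g) (mult (vs (2 ^ n / 2)) f) k‖ ^ 2) := by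
      refine Finset.sum_le_sum fun k _ => ?_
      have h1 := norm_add_le (mul (mult (dl n) f) (mult (vs (2 ^ n)) g) k)
        (mul (mult (dl n) g) (mult (vs (2 ^ n / 2)) f) k)
      have h2 : ‖h n k‖ ^ 2 ≤ (‖mul (mult (dl n) f) (mult (vs (2 ^ n)) g) k‖ +
        ‖mul (mult (dl n) g) (mult (vs (2 ^ n / 2)) f) k‖) ^ 2 := by
        gcongr
      nlinarith [sq_nonneg (‖mul (mult (dl n) f) (mult (vs (2 ^ n)) g) k‖ -
        ‖mul (mult (dl n) g) (mult (vs (2 ^ n / 2)) f) k‖)]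
    rw [Finset.sum_add_distrib, ← Finset.mul_sum, ← Finset.mul_sum] at this
    nlinarith
  calc ∑ k ∈ F, wt σ k * ‖Tp f g N k‖ ^ 2
      ≤ ∑ k ∈ F, C₁ * ∑ n ∈ Finset.range N, ((4 : ℝ) ^ σ) ^ n * ‖h n k‖ ^ 2 :=
        Finset.sum_le_sum fun k _ => hpt k
    _ = C₁ * ∑ n ∈ Finset.range N, ((4 : ℝ) ^ σ) ^ n * ∑ k ∈ F, ‖h n k‖ ^ 2 := by
        rw [← Finset.mul_sum, Finset.sum_comm]; simp_rw [Finset.mul_sum]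
    _ ≤ C₁ * ∑ n ∈ Finset.range N, ((4 : ℝ) ^ σ) ^ n *
        (8 * (B ^ 2 * ∑' k, ‖mult (dl n) f k‖ ^ 2 + A ^ 2 * ∑' k, ‖mult (dl n) g k‖ ^ 2)) := by
        gcongr with n _
        exact hn n
    _ = C₁ * (8 * (B ^ 2 * ∑ n ∈ Finset.range N, ((4 : ℝ) ^ σ) ^ n * ∑' k, ‖mult (dl n) f k‖ ^ 2
        + A ^ 2 * ∑ n ∈ Finset.range N, ((4 : ℝ) ^ σ) ^ n * ∑' k, ‖mult (dl n) g k‖ ^ 2)) := by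
        congr 1
        simp_rw [Finset.mul_sum]
        rw [← Finset.sum_add_distrib, Finset.mul_sum]
        exact Finset.sum_congr rfl fun n _ => by ring
    _ ≤ C₁ * (8 * (B ^ 2 * (C₂ * E σ f) + A ^ 2 * (C₂ * E σ g))) := by
        have b1 := block_sum σ analys hf hfs N
        have b2 := block_sum σ analys hg hgs N
        gcongr
    _ = _ := by ring

lemma summable_wt {σ : ℝ} (hσ : 1 / 2 < σ) : Summable fun k : ℤ => wt (-σ) k := by
  have h1 := Real.summable_abs_int_rpow (b := 2 * σ) (by linarith)
  have h2 : Summable fun k : ℤ => if k = 0 then (1 : ℝ) else 0 :=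
    (hasSum_ite_eq (0 : ℤ) (1 : ℝ)).summable
  refine Summable.of_nonneg_of_le (fun k => wt_nonneg _ k) (fun k => ?_) (h1.add h2)
  by_cases hk : k = 0
  · subst hk
    simp only [wt, Int.cast_zero, if_true]
    have : (0 : ℝ) ≤ |(0 : ℝ)| ^ (-(2 * σ)) := by positivity
    norm_num at this ⊢
    linarith
  · rw [if_neg hk, add_zero]
    have hk' : 0 < |(k : ℝ)| := by positivity
    rw [show -(2 * σ) = (2 : ℝ) * (-σ) by ring, Real.rpow_mul hk'.le]
    unfold wt
    apply Real.rpow_le_rpow_of_nonpos (by positivity) _ (by linarith)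
    norm_num

lemma sobolev {σ : ℝ} (hσ : 1 / 2 < σ) {c : FC} (hc : memHs σ c) :
    (Summable fun k => ‖c k‖) ∧ ∑' k, ‖c k‖ ≤ Real.sqrt ((∑' k, wt (-σ) k) * E σ c) := by
  have h : ∀ F : Finset ℤ, ∑ k ∈ F, ‖c k‖ ≤ Real.sqrt ((∑' k, wt (-σ) k) * E σ c) := by
    intro F
    apply Real.le_sqrt_of_sq_le
    refine (Finset.sum_sq_le_sum_mul_sum_of_sq_le_mul F (f := fun k => wt (-σ) k)
      (g := fun k => wt σ k * ‖c k‖ ^ 2) (fun k _ => wt_nonneg _ _)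
      (fun k _ => mul_nonneg (wt_nonneg _ _) (by positivity)) ?_).trans ?_
    · intro k _
      apply le_of_eq
      rw [← mul_assoc, wt, wt, ← Real.rpow_add (by positivity)]
      simp
    · refine mul_le_mul ((summable_wt hσ).sum_le_tsum F fun k _ => wt_nonneg _ _)
        (hc.sum_le_tsum F fun k _ => mul_nonneg (wt_nonneg _ _) (by positivity)) ?_ ?_
      · exact Finset.sum_nonneg fun k _ => mul_nonneg (wt_nonneg _ _) (by positivity)
      · exact tsum_nonneg fun k => wt_nonneg _ _
  have hs : Summable fun k => ‖c k‖ := summable_of_sum_le (fun k => norm_nonneg _) h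
  exact ⟨hs, hs.tsum_le_of_sum_le h⟩

lemma eval_le_tsum {c : FC} (hc : Summable fun k => ‖c k‖) (x : ℝ) : ‖eval c x‖ ≤ ∑' k, ‖c k‖ := by
  unfold eval
  refine (norm_tsum_le_tsum_norm ?_).trans ?_
  · simpa only [eval_term_norm] using hc
  · simp only [eval_term_norm]; exact le_rfl

lemma eval_le_linfty {c : FC} (hc : Summable fun k => ‖c k‖) (x : ℝ) : ‖eval c x‖ ≤ linfty c := by
  unfold linfty
  refine le_ciSup (f := fun x => ‖eval c x‖) ⟨∑' k, ‖c k‖, ?_⟩ x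
  rintro _ ⟨y, rfl⟩
  exact eval_le_tsum hc y

lemma linfty_nonneg (c : FC) : 0 ≤ linfty c := Real.iSup_nonneg fun _ => norm_nonneg _

lemma algebra_bound (σ : ℝ) (hσ : 1 / 2 < σ) : ∃ L > (0 : ℝ), ∀ f g : FC,
    memHs σ f → memHs σ g → memHs σ (mul f g) ∧ E σ (mul f g) ≤ L * (E σ f * E σ g) := by
  obtain ⟨K, hK, hm⟩ := moser σ (by linarith)
  have hS : 0 ≤ ∑' k, wt (-σ) k := tsum_nonneg fun k => wt_nonneg _ _
  refine ⟨2 * K * (∑' k, wt (-σ) k) + 1, by positivity, ?_⟩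
  intro f g hf hg
  obtain ⟨f1, f2⟩ := sobolev hσ hf
  obtain ⟨g1, g2⟩ := sobolev hσ hg
  obtain ⟨m1, m2⟩ := hm f g _ _ f1 g1 hf hg (fun x => (eval_le_tsum f1 x).trans f2)
    (fun x => (eval_le_tsum g1 x).trans g2)
  refine ⟨m1, m2.trans ?_⟩
  have ef := E_nonneg σ f
  have eg := E_nonneg σ g
  rw [Real.sq_sqrt (by positivity), Real.sq_sqrt (by positivity)]
  nlinarith [mul_nonneg ef eg]

lemma E_mono {σ τ : ℝ} {c d : FC} (hd : memHs τ d)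
    (h : ∀ k, wt σ k * ‖c k‖ ^ 2 ≤ wt τ k * ‖d k‖ ^ 2) : memHs σ c ∧ E σ c ≤ E τ d := by
  apply E_of_sum_le
  intro F
  exact (Finset.sum_le_sum fun k _ => h k).trans
    (hd.sum_le_tsum F fun k _ => mul_nonneg (wt_nonneg _ _) (by positivity))

lemma E_add {σ : ℝ} {c d : FC} (hc : memHs σ c) (hd : memHs σ d) :
    memHs σ (c + d) ∧ E σ (c + d) ≤ 2 * (E σ c + E σ d) := by
  apply E_of_sum_le
  intro F
  have h1 := hc.sum_le_tsum F fun k _ => mul_nonneg (wt_nonneg _ _) (by positivity)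
  have h2 := hd.sum_le_tsum F fun k _ => mul_nonneg (wt_nonneg _ _) (by positivity)
  have h3 : ∑ k ∈ F, wt σ k * ‖(c + d) k‖ ^ 2 ≤
      ∑ k ∈ F, 2 * (wt σ k * ‖c k‖ ^ 2 + wt σ k * ‖d k‖ ^ 2) := by
    refine Finset.sum_le_sum fun k _ => ?_
    have e1 := norm_add_le (c k) (d k)
    have e2 : ‖(c + d) k‖ ^ 2 ≤ (‖c k‖ + ‖d k‖) ^ 2 := by rw [Pi.add_apply]; gcongr
    have e3 : ‖(c + d) k‖ ^ 2 ≤ 2 * (‖c k‖ ^ 2 + ‖d k‖ ^ 2) := by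
      nlinarith [sq_nonneg (‖c k‖ - ‖d k‖)]
    nlinarith [mul_le_mul_of_nonneg_left e3 (wt_nonneg σ k)]
  rw [← Finset.mul_sum, Finset.sum_add_distrib] at h3
  unfold E
  linarith

lemma E_neg (σ : ℝ) (c : FC) : E σ (-c) = E σ c := by simp [E]

lemma memHs_neg {σ : ℝ} {c : FC} (hc : memHs σ c) : memHs σ (-c) := by
  simpa [memHs] using hc

lemma memHs_sub {σ : ℝ} {c d : FC} (hc : memHs σ c) (hd : memHs σ d) : memHs σ (c - d) := by
  rw [sub_eq_add_neg]; exact (E_add hc (memHs_neg hd)).1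

lemma E_half {σ : ℝ} {c : FC} (hc : memHs σ c) :
    memHs σ ((1 / 2 : ℝ) • c) ∧ E σ ((1 / 2 : ℝ) • c) ≤ E σ c := by
  refine E_mono hc fun k => ?_
  rw [Pi.smul_apply, norm_smul]
  refine mul_le_mul_of_nonneg_left ?_ (wt_nonneg _ _)
  have : ‖(1 / 2 : ℝ)‖ = 1 / 2 := by norm_num
  rw [this]
  nlinarith [sq_nonneg ‖c k‖]

lemma wt_succ (s : ℝ) (k : ℤ) : wt s k = wt (s - 1) k * (1 + (k : ℝ) ^ 2) := by
  unfold wt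
  rw [Real.rpow_sub_one (by positivity)]
  field_simp

lemma E_low {s : ℝ} {c : FC} (hc : memHs s c) : memHs (s - 1) c ∧ E (s - 1) c ≤ E s c := by
  refine E_mono hc fun k => ?_
  rw [wt_succ s k]
  have := mul_nonneg (wt_nonneg (s - 1) k) (sq_nonneg ‖c k‖)
  nlinarith [mul_nonneg this (sq_nonneg (k : ℝ))]

lemma norm_D1 (c : FC) (k : ℤ) : ‖D1 c k‖ ^ 2 = (k : ℝ) ^ 2 * ‖c k‖ ^ 2 := by
  simp [D1, mul_pow]

lemma E_D1 {s : ℝ} {c : FC} (hc : memHs s c) : memHs (s - 1) (D1 c) ∧ E (s - 1) (D1 c) ≤ E s c := by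
  refine E_mono hc fun k => ?_
  rw [wt_succ s k, norm_D1]
  have := mul_nonneg (wt_nonneg (s - 1) k) (sq_nonneg ‖c k‖)
  nlinarith

lemma E_G0 {s : ℝ} {c : FC} (hc : memHs (s - 1) c) : E s (D1 (helmInv c)) ≤ E (s - 1) c := by
  refine (E_mono hc fun k => ?_).2
  rw [wt_succ s k, norm_D1, helmInv, mult, norm_mul, mul_pow, Complex.norm_real, Real.norm_eq_abs,
    sq_abs]
  have h := mul_nonneg (wt_nonneg (s - 1) k) (sq_nonneg ‖c k‖)
  have hk : (1 + (k : ℝ) ^ 2) * ((k : ℝ) ^ 2 * ((1 + (k : ℝ) ^ 2)⁻¹) ^ 2) ≤ 1 := by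
    have : (0 : ℝ) < 1 + (k : ℝ) ^ 2 := by positivity
    field_simp
    linarith
  nlinarith [mul_le_mul_of_nonneg_left hk h]

/-- the nonlocal operator applied to the three quadratic terms -/
def GG (a b c : FC) : FC := D1 (helmInv ((1 / 2 : ℝ) • a + b + (1 / 2 : ℝ) • c))

lemma E_GG {s : ℝ} {a b c : FC} {Q : ℝ} (ha : memHs (s - 1) a ∧ E (s - 1) a ≤ Q)
    (hb : memHs (s - 1) b ∧ E (s - 1) b ≤ Q) (hc : memHs (s - 1) c ∧ E (s - 1) c ≤ Q) :
    E s (GG a b c) ≤ 12 * Q := by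
  have h1 := E_half ha.1
  have h2 := E_half hc.1
  have h3 := E_add h1.1 hb.1
  have h4 := E_add h3.1 h2.1
  have h5 := E_G0 h4.1
  have hQ := (E_nonneg _ _).trans ha.2
  unfold GG
  linarith [h1.2, h2.2, h3.2, h4.2, ha.2, hb.2, hc.2]

lemma GG_sub (a b c a' b' c' : FC) : GG a b c - GG a' b' c' = GG (a - a') (b - b') (c - c') := by
  ext k
  simp [GG, D1, helmInv, mult]
  ring

lemma pairNorm_eq (s₁ s₂ : ℝ) (c d : FC) : pairNorm s₁ s₂ c d = Real.sqrt (E s₁ c + E s₂ d) := by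
  unfold pairNorm hsNorm
  change Real.sqrt (Real.sqrt (E s₁ c) ^ 2 + Real.sqrt (E s₂ d) ^ 2) = _
  rw [Real.sq_sqrt (E_nonneg s₁ c), Real.sq_sqrt (E_nonneg s₂ d)]

lemma E_mul_sub {σ : ℝ} (hσ : 1 / 2 < σ) {L : ℝ} (hL0 : 0 < L) (hL : ∀ f g : FC,
    memHs σ f → memHs σ g → memHs σ (mul f g) ∧ E σ (mul f g) ≤ L * (E σ f * E σ g))
    {f g f' g' : FC} (hf : memHs σ f) (hg : memHs σ g) (hf' : memHs σ f') (hg' : memHs σ g')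
    {D P₁ P₂ : ℝ} (h1 : E σ (f - f') ≤ D) (h2 : E σ (g - g') ≤ D) (h3 : E σ g ≤ P₁)
    (h4 : E σ f' ≤ P₂) :
    memHs σ (mul f g - mul f' g') ∧ E σ (mul f g - mul f' g') ≤ 2 * L * (P₁ + P₂) * D := by
  have e : mul f g - mul f' g' = mul (f - f') g + mul f' (g - g') := by
    rw [mul_sub_left (sobolev hσ hf).1 (sobolev hσ hf').1 (sobolev hσ hg).1,
      mul_sub_right (sobolev hσ hg).1 (sobolev hσ hg').1 (sobolev hσ hf').1]
    abel
  have m1 := hL _ _ (memHs_sub hf hf') hg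
  have m2 := hL _ _ hf' (memHs_sub hg hg')
  have m3 := E_add m1.1 m2.1
  rw [e]
  refine ⟨m3.1, m3.2.trans ?_⟩
  have hD := (E_nonneg _ _).trans h1
  have hP1 := (E_nonneg _ _).trans h3
  have hP2 := (E_nonneg _ _).trans h4
  have t1 : E σ (f - f') * E σ g ≤ D * P₁ := mul_le_mul h1 h3 (E_nonneg _ _) hD
  have t2 : E σ f' * E σ (g - g') ≤ P₂ * D := mul_le_mul h4 h2 (E_nonneg _ _) hP2
  nlinarith [m1.2, m2.2, mul_le_mul_of_nonneg_left t1 hL0.le, mul_le_mul_of_nonneg_left t2 hL0.le]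

lemma sqrt_fin {X Q W P : ℝ} (hW : 0 ≤ W) (hP : 0 ≤ P) (hQ : 0 ≤ Q)
    (h : X ≤ Q * W ^ 2 * P) : Real.sqrt X ≤ Real.sqrt Q * W * Real.sqrt P := by
  refine (Real.sqrt_le_sqrt h).trans (le_of_eq ?_)
  rw [Real.sqrt_mul (by positivity), Real.sqrt_mul hQ, Real.sqrt_sq hW]

end FC
/-- For `s > 5/2` and `b(u,η) = (−G(u,η), −η ∂ₓ u)`, there is `C = C(s) > 0`
such that for all `(u,η), (v,ρ) ∈ H^s(𝕋) × H^{s-1}(𝕋)`: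
`‖b(X)‖ ≤ C (‖u‖_{W^{1,∞}} + ‖η‖_{W^{1,∞}}) ‖(u,η)‖` and
`‖b(X) − b(Y)‖ ≤ C (‖(u,η)‖ + ‖(v,ρ)‖) ‖(u−v, η−ρ)‖` (in `H^s×H^{s-1}`). -/
theorem statement1 (s : ℝ) (hs : 5 / 2 < s) :
    ∃ C > (0 : ℝ), ∀ u η v ρ : FC,
      FC.memHs s u → FC.memHs (s - 1) η → FC.memHs s v → FC.memHs (s - 1) ρ →
      FC.isReal u → FC.isReal η → FC.isReal v → FC.isReal ρ →
      (FC.pairNorm s (s - 1) (-(Gfun u η)) (-(FC.mul η (FC.D1 u)))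
          ≤ C * (FC.w1infty u + FC.w1infty η) * FC.pairNorm s (s - 1) u η) ∧
      (FC.pairNorm s (s - 1) (-(Gfun u η) - -(Gfun v ρ))
          (-(FC.mul η (FC.D1 u)) - -(FC.mul ρ (FC.D1 v)))
        ≤ C * (FC.pairNorm s (s - 1) u η + FC.pairNorm s (s - 1) v ρ)
            * FC.pairNorm s (s - 1) (u - v) (η - ρ)) := by
  have hσ : 1 / 2 < s - 1 := by linarith
  obtain ⟨K, hK, hm⟩ := FC.moser (s - 1) (by linarith)
  obtain ⟨L, hL, ha⟩ := FC.algebra_bound (s - 1) hσ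
  refine ⟨Real.sqrt (26 * (K + L)), by positivity, ?_⟩
  intro u η v ρ hu hη hv hρ _ _ _ _
  have u0 := FC.E_low hu
  have u1 := FC.E_D1 hu
  have v0 := FC.E_low hv
  have v1 := FC.E_D1 hv
  have hG : ∀ u η : FC, Gfun u η =
      FC.GG (FC.mul u u) (FC.mul (FC.D1 u) (FC.D1 u)) (FC.mul η η) := fun _ _ => rfl
  have nuu := FC.E_nonneg s u
  have nη := FC.E_nonneg (s - 1) η
  have nv := FC.E_nonneg s v
  have nρ := FC.E_nonneg (s - 1) ρ
  constructor
  · rw [FC.pairNorm_eq, FC.pairNorm_eq, FC.E_neg, FC.E_neg]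
    have l1 := FC.linfty_nonneg u
    have l2 := FC.linfty_nonneg (FC.D1 u)
    have l3 := FC.linfty_nonneg η
    have l4 := FC.linfty_nonneg (FC.D1 η)
    set W := FC.w1infty u + FC.w1infty η with hW
    have hWe : W = FC.linfty u + FC.linfty (FC.D1 u) + (FC.linfty η + FC.linfty (FC.D1 η)) := rfl
    have hW0 : 0 ≤ W := by linarith
    set P := FC.E s u + FC.E (s - 1) η with hP
    have su := (FC.sobolev hσ u0.1).1
    have su1 := (FC.sobolev hσ u1.1).1
    have sη := (FC.sobolev hσ hη).1
    have bu : ∀ x, ‖FC.eval u x‖ ≤ W := fun x => (FC.eval_le_linfty su x).trans (by linarith)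
    have bu1 : ∀ x, ‖FC.eval (FC.D1 u) x‖ ≤ W :=
      fun x => (FC.eval_le_linfty su1 x).trans (by linarith)
    have bη : ∀ x, ‖FC.eval η x‖ ≤ W := fun x => (FC.eval_le_linfty sη x).trans (by linarith)
    have key : ∀ f g : FC, (Summable fun k => ‖f k‖) → (Summable fun k => ‖g k‖) →
        FC.memHs (s - 1) f → FC.memHs (s - 1) g → (∀ x, ‖FC.eval f x‖ ≤ W) →
        (∀ x, ‖FC.eval g x‖ ≤ W) → FC.E (s - 1) f ≤ P → FC.E (s - 1) g ≤ P →
        FC.memHs (s - 1) (FC.mul f g) ∧ FC.E (s - 1) (FC.mul f g) ≤ 2 * K * W ^ 2 * P := by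
      intro f g hf hg mf mg bf bg ef eg
      obtain ⟨h1, h2⟩ := hm f g W W hf hg mf mg bf bg
      refine ⟨h1, h2.trans ?_⟩
      calc K * (W ^ 2 * FC.E (s - 1) f + W ^ 2 * FC.E (s - 1) g)
          ≤ K * (W ^ 2 * P + W ^ 2 * P) := by gcongr
        _ = _ := by ring
    have eu : FC.E (s - 1) u ≤ P := by linarith [u0.2]
    have eu1 : FC.E (s - 1) (FC.D1 u) ≤ P := by linarith [u1.2]
    have eη : FC.E (s - 1) η ≤ P := by linarith
    have g1 := FC.E_GG (key u u su su u0.1 u0.1 bu bu eu eu)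
      (key _ _ su1 su1 u1.1 u1.1 bu1 bu1 eu1 eu1) (key η η sη sη hη hη bη bη eη eη)
    have g2 := (key η (FC.D1 u) sη su1 hη u1.1 bη bu1 eη eu1).2
    apply FC.sqrt_fin hW0 (by positivity) (by positivity)
    rw [hG]
    have : 0 ≤ L * W ^ 2 * P := by positivity
    nlinarith
  · have r1 : -(Gfun u η) - -(Gfun v ρ) = -(Gfun u η - Gfun v ρ) := by abel
    have r2 : -(FC.mul η (FC.D1 u)) - -(FC.mul ρ (FC.D1 v))
        = -(FC.mul η (FC.D1 u) - FC.mul ρ (FC.D1 v)) := by abel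
    rw [r1, r2, FC.pairNorm_eq, FC.pairNorm_eq, FC.pairNorm_eq, FC.pairNorm_eq, FC.E_neg, FC.E_neg,
      hG, hG, FC.GG_sub]
    set P₁ := FC.E s u + FC.E (s - 1) η with hP₁
    set P₂ := FC.E s v + FC.E (s - 1) ρ with hP₂
    set D := FC.E s (u - v) + FC.E (s - 1) (η - ρ) with hD
    have d1 := FC.E_nonneg s (u - v)
    have d2 := FC.E_nonneg (s - 1) (η - ρ)
    have huv := FC.memHs_sub hu hv
    have w0 := FC.E_low huv
    have w1 := FC.E_D1 huv
    have eD : FC.D1 (u - v) = FC.D1 u - FC.D1 v := by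
      ext k; simp [FC.D1, mul_sub]
    rw [eD] at w1
    have w0' : FC.E (s - 1) (u - v) ≤ D := by linarith [w0.2]
    have w1' : FC.E (s - 1) (FC.D1 u - FC.D1 v) ≤ D := by linarith [w1.2]
    have w2' : FC.E (s - 1) (η - ρ) ≤ D := by linarith
    have a1 : FC.E (s - 1) u ≤ P₁ := by linarith [u0.2]
    have a2 : FC.E (s - 1) (FC.D1 u) ≤ P₁ := by linarith [u1.2]
    have a3 : FC.E (s - 1) η ≤ P₁ := by linarith
    have b1 : FC.E (s - 1) v ≤ P₂ := by linarith [v0.2]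
    have b2 : FC.E (s - 1) (FC.D1 v) ≤ P₂ := by linarith [v1.2]
    have b3 : FC.E (s - 1) ρ ≤ P₂ := by linarith
    have g1 := FC.E_GG (FC.E_mul_sub hσ hL ha u0.1 u0.1 v0.1 v0.1 w0' w0' a1 b1)
      (FC.E_mul_sub hσ hL ha u1.1 u1.1 v1.1 v1.1 w1' w1' a2 b2)
      (FC.E_mul_sub hσ hL ha hη hη hρ hρ w2' w2' a3 b3)
    have g2 := (FC.E_mul_sub hσ hL ha hη u1.1 hρ v1.1 w2' w1' a2 b3).2
    have hP10 : 0 ≤ P₁ := by positivity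
    have hP20 : 0 ≤ P₂ := by positivity
    have hD0 : 0 ≤ D := by positivity
    apply FC.sqrt_fin (by positivity) hD0 (by positivity)
    have hsq : P₁ + P₂ ≤ (Real.sqrt P₁ + Real.sqrt P₂) ^ 2 := by
      nlinarith [Real.sq_sqrt hP10, Real.sq_sqrt hP20, Real.sqrt_nonneg P₁, Real.sqrt_nonneg P₂]
    calc _ ≤ 26 * L * (P₁ + P₂) * D := by linarith
      _ ≤ 26 * (K + L) * (Real.sqrt P₁ + Real.sqrt P₂) ^ 2 * D := by
        gcongr
        linarith
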